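/- Let p > 1, a, b, L > 0 and let k be a positive integer. If u is a nontrivial C¹ weak solution of −Δ^{a,b}_p u = k^p λ^{a,b}_{1,p}(0,L) |u|^{p−2} u on (0,L) with u(0) = u(L) = 0, then the zero set of u in [0,L] is exactly { jL/k : j = 0, 1, …, k }, each zero is simple (u' is nonzero there), and u has alternating sign on the consecutive intervals (jL/k, (j+1)L/k), j = 0, …, k−1. -/

import Mathlib

open Set

/-- `u` is C¹ on `[α, γ]` with derivative `u'` there. -/
def C1On (α γ : ℝ) (u u' : ℝ → ℝ) : Prop :=
  (∀ t ∈ Set.Icc α γ, HasDerivWithinAt u (u' t) (Set.Icc α γ) t) ∧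
  ContinuousOn u' (Set.Icc α γ)

/-- Admissible functions on `[0, L]`: C¹ with zero boundary values. -/
def Adm (L : ℝ) (u u' : ℝ → ℝ) : Prop :=
  C1On 0 L u u' ∧ u 0 = 0 ∧ u L = 0

/-- The asymmetric energy integrand `a^p (s⁺)^p + b^p (s⁻)^p`. -/
noncomputable def asymE (p a b s : ℝ) : ℝ :=
  a ^ p * (max s 0) ^ p + b ^ p * (max (-s) 0) ^ p

/-- The asymmetric flux `a^p (s⁺)^(p-1) - b^p (s⁻)^(p-1)`. -/
noncomputable def asymFlux (p a b s : ℝ) : ℝ :=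
  a ^ p * (max s 0) ^ (p - 1) - b ^ p * (max (-s) 0) ^ (p - 1)

/-- The first Dirichlet eigenvalue `λ^{a,b}_{1,p}(0,L)`, as the infimum of the
asymmetric energy over normalized admissible functions. -/
noncomputable def lam1 (p a b L : ℝ) : ℝ :=
  sInf { E : ℝ | ∃ u u' : ℝ → ℝ, Adm L u u' ∧
    (∫ t in (0:ℝ)..L, |u t| ^ p) = 1 ∧
    E = ∫ t in (0:ℝ)..L, asymE p a b (u' t) }

/-- `u` (a C¹ function on `[0,L]` with derivative `u'` and zero boundary values)
is a weak solution of `-Δ^{a,b}_p u = g` on `(0,L)`. -/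
def IsWeakSol (p a b L : ℝ) (u u' g : ℝ → ℝ) : Prop :=
  Adm L u u' ∧
  ∀ φ φ' : ℝ → ℝ, Adm L φ φ' →
    (∫ t in (0:ℝ)..L, asymFlux p a b (u' t) * φ' t) =
      ∫ t in (0:ℝ)..L, g t * φ t


lemma aux_hasDerivAt_pos (p : ℝ) (hp : 1 < p) (x : ℝ) :
    HasDerivAt (fun x : ℝ => (max x 0) ^ p) (p * (max x 0) ^ (p - 1)) x := by
  have hp0 : p ≠ 0 := by linarith
  have hp1 : p - 1 ≠ 0 := by linarith
  rcases lt_trichotomy x 0 with h | h | h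
  · have : (fun x : ℝ => (max x 0) ^ p) =ᶠ[nhds x] fun _ => 0 := by
      filter_upwards [Iio_mem_nhds h] with y hy
      rw [max_eq_right (le_of_lt hy), Real.zero_rpow hp0]
    rw [max_eq_right h.le, Real.zero_rpow hp1, mul_zero]
    exact (hasDerivAt_const x (0:ℝ)).congr_of_eventuallyEq this
  · subst h
    have h1 : HasDerivWithinAt (fun x : ℝ => (max x 0) ^ p) (p * (max (0:ℝ) 0) ^ (p - 1)) (Ici 0) 0 := by
      have := (Real.hasDerivAt_rpow_const (x := 0) (p := p) (Or.inr hp.le)).hasDerivWithinAt (s := Ici 0)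
      rw [max_self]
      refine this.congr ?_ ?_
      · intro y hy; rw [max_eq_left hy]
      · simp
    have h2 : HasDerivWithinAt (fun x : ℝ => (max x 0) ^ p) (p * (max (0:ℝ) 0) ^ (p - 1)) (Iic 0) 0 := by
      have := (hasDerivAt_const (0:ℝ) (0:ℝ)).hasDerivWithinAt (s := Iic 0)
      rw [max_self, Real.zero_rpow hp1, mul_zero]
      refine this.congr ?_ ?_
      · intro y hy; rw [max_eq_right hy, Real.zero_rpow hp0]
      · simp [Real.zero_rpow hp0]
    have := h1.union h2
    rwa [Ici_union_Iic, hasDerivWithinAt_univ] at this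
  · have : (fun x : ℝ => (max x 0) ^ p) =ᶠ[nhds x] fun x => x ^ p := by
      filter_upwards [Ioi_mem_nhds h] with y hy
      rw [max_eq_left (le_of_lt hy)]
    rw [max_eq_left h.le]
    exact (Real.hasDerivAt_rpow_const (Or.inr hp.le)).congr_of_eventuallyEq this

lemma aux_asymE_deriv (p a b : ℝ) (hp : 1 < p) (s : ℝ) :
    HasDerivAt (asymE p a b) (p * asymFlux p a b s) s := by
  have h1 := (aux_hasDerivAt_pos p hp s).const_mul (a ^ p)
  have h2 := ((aux_hasDerivAt_pos p hp (-s)).comp s (hasDerivAt_neg s)).const_mul (b ^ p)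
  have := h1.add h2
  unfold asymFlux
  refine (this.congr_deriv ?_).congr_of_eventuallyEq ?_
  · ring
  · filter_upwards with y
    simp [asymE]

lemma aux_asymFlux_cont (p a b : ℝ) (hp : 1 < p) : Continuous (asymFlux p a b) := by
  have h : 0 ≤ p - 1 := by linarith
  unfold asymFlux
  refine Continuous.sub ?_ ?_
  · exact continuous_const.mul ((continuous_id.max continuous_const).rpow_const (fun _ => Or.inr h))
  · exact continuous_const.mul ((continuous_id.neg.max continuous_const).rpow_const (fun _ => Or.inr h))

lemma aux_asymE_cont (p a b : ℝ) (hp : 1 < p) : Continuous (asymE p a b) :=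
  continuous_iff_continuousAt.2 fun s => (aux_asymE_deriv p a b hp s).continuousAt

lemma aux_asymFlux_neg (p a b s : ℝ) : asymFlux p a b (-s) = - asymFlux p b a s := by
  simp [asymFlux]

lemma aux_asymE_neg (p a b s : ℝ) : asymE p a b (-s) = asymE p b a s := by
  simp [asymE, add_comm]

lemma aux_asymFlux_nonneg (p a b s : ℝ) (hp : 1 < p) (hs : 0 ≤ s) :
    asymFlux p a b s = a ^ p * s ^ (p - 1) := by
  have h : p - 1 ≠ 0 := by linarith
  simp [asymFlux, hs, Real.zero_rpow h]

lemma aux_asymE_nonneg (p a b s : ℝ) (hp : 1 < p) (hs : 0 ≤ s) :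
    asymE p a b s = a ^ p * s ^ p := by
  have h : p ≠ 0 := by linarith
  simp [asymE, hs, Real.zero_rpow h]

lemma aux_asymE_ge (p a b s : ℝ) (ha : 0 ≤ a) (hb : 0 ≤ b) : 0 ≤ asymE p a b s := by
  unfold asymE; positivity

lemma aux_rpow_mul_self (p s : ℝ) (hp : 1 < p) (hs : 0 ≤ s) : s ^ (p - 1) * s = s ^ p := by
  rcases hs.eq_or_lt with h | h
  · subst h; rw [mul_zero, Real.zero_rpow (by linarith)]
  · rw [← Real.rpow_add_one h.ne']; congr 1; ring

lemma aux_flux_mul_self (p a b s : ℝ) (hp : 1 < p) : asymFlux p a b s * s = asymE p a b s := by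
  have key : ∀ a b s : ℝ, 0 ≤ s → asymFlux p a b s * s = asymE p a b s := by
    intro a b s hs
    rw [aux_asymFlux_nonneg p a b s hp hs, aux_asymE_nonneg p a b s hp hs,
      ← aux_rpow_mul_self p s hp hs]; ring
  rcases le_total 0 s with h | h
  · exact key a b s h
  · have := key b a (-s) (by linarith)
    rw [aux_asymFlux_neg, aux_asymE_neg] at this
    linarith

lemma aux_abs_rpow (p s : ℝ) (hp : 1 < p) : |s| ^ p = asymE p 1 1 s := by
  rcases le_total 0 s with h | h
  · rw [aux_asymE_nonneg p 1 1 s hp h, abs_of_nonneg h, Real.one_rpow, one_mul]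
  · have := aux_asymE_nonneg p 1 1 (-s) hp (by linarith)
    rw [aux_asymE_neg] at this
    rw [this, abs_of_nonpos h, Real.one_rpow, one_mul]

lemma aux_abs_flux (p s : ℝ) (hp : 1 < p) : |s| ^ (p - 2) * s = asymFlux p 1 1 s := by
  have key : ∀ s : ℝ, 0 ≤ s → |s| ^ (p - 2) * s = asymFlux p 1 1 s := by
    intro s h
    rw [aux_asymFlux_nonneg p 1 1 s hp h, abs_of_nonneg h, Real.one_rpow, one_mul]
    rcases h.eq_or_lt with h | h
    · subst h; rw [mul_zero, Real.zero_rpow (by linarith)]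
    · rw [← Real.rpow_add_one h.ne']; congr 1; ring
  rcases le_total 0 s with h | h
  · exact key s h
  · have := key (-s) (by linarith)
    rw [aux_asymFlux_neg, abs_neg] at this
    linarith

lemma aux_flux_smul (p a b c s : ℝ) (hc : 0 ≤ c) :
    asymFlux p a b (c * s) = c ^ (p - 1) * asymFlux p a b s := by
  have h1 : max (c * s) 0 = c * max s 0 := by rw [mul_max_of_nonneg _ _ hc, mul_zero]
  have h2 : max (-(c * s)) 0 = c * max (-s) 0 := by
    rw [mul_max_of_nonneg _ _ hc, mul_zero, mul_neg]
  unfold asymFlux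
  rw [h1, h2, Real.mul_rpow hc (le_max_right _ _), Real.mul_rpow hc (le_max_right _ _)]
  ring

lemma aux_E_smul (p a b c s : ℝ) (hc : 0 ≤ c) :
    asymE p a b (c * s) = c ^ p * asymE p a b s := by
  have h1 : max (c * s) 0 = c * max s 0 := by rw [mul_max_of_nonneg _ _ hc, mul_zero]
  have h2 : max (-(c * s)) 0 = c * max (-s) 0 := by
    rw [mul_max_of_nonneg _ _ hc, mul_zero, mul_neg]
  unfold asymE
  rw [h1, h2, Real.mul_rpow hc (le_max_right _ _), Real.mul_rpow hc (le_max_right _ _)]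
  ring

lemma aux_flux_mono (p a b : ℝ) (hp : 1 < p) (ha : 0 ≤ a) (hb : 0 ≤ b) :
    Monotone (asymFlux p a b) := by
  intro x y hxy
  have h : 0 ≤ p - 1 := by linarith
  unfold asymFlux
  have h1 : (max x 0) ^ (p - 1) ≤ (max y 0) ^ (p - 1) :=
    Real.rpow_le_rpow (le_max_right _ _) (max_le_max_right _ hxy) h
  have h2 : (max (-y) 0) ^ (p - 1) ≤ (max (-x) 0) ^ (p - 1) :=
    Real.rpow_le_rpow (le_max_right _ _) (max_le_max_right _ (by linarith)) h
  have h3 : 0 ≤ a ^ p := by positivity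
  have h4 : 0 ≤ b ^ p := by positivity
  nlinarith [mul_le_mul_of_nonneg_left h1 h3, mul_le_mul_of_nonneg_left h2 h4]

/-- Convexity (tangent line inequality) for the energy. -/
lemma aux_tangent (p a b q r : ℝ) (hp : 1 < p) (ha : 0 ≤ a) (hb : 0 ≤ b) :
    asymE p a b q + p * asymFlux p a b q * (r - q) ≤ asymE p a b r := by
  rcases lt_trichotomy q r with h | h | h
  · obtain ⟨ξ, hξ, he⟩ := exists_hasDerivAt_eq_slope (asymE p a b) (fun s => p * asymFlux p a b s) h
      (aux_asymE_cont p a b hp).continuousOn (fun x _ => aux_asymE_deriv p a b hp x)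
    have hm := aux_flux_mono p a b hp ha hb hξ.1.le
    rw [eq_div_iff (by linarith)] at he
    have : p * asymFlux p a b q * (r - q) ≤ p * asymFlux p a b ξ * (r - q) := by
      gcongr
    linarith
  · subst h; simp
  · obtain ⟨ξ, hξ, he⟩ := exists_hasDerivAt_eq_slope (asymE p a b) (fun s => p * asymFlux p a b s) h
      (aux_asymE_cont p a b hp).continuousOn (fun x _ => aux_asymE_deriv p a b hp x)
    have hm := aux_flux_mono p a b hp ha hb hξ.2.le
    rw [eq_div_iff (by linarith)] at he
    have : p * asymFlux p a b ξ * (q - r) ≤ p * asymFlux p a b q * (q - r) := by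
      gcongr
    linarith

lemma aux_flux_inv (p a b s : ℝ) (hp : 1 < p) (ha : 0 < a) (hb : 0 < b) :
    asymFlux (p / (p - 1)) a⁻¹ b⁻¹ (asymFlux p a b s) = s := by
  have hp1 : 0 < p - 1 := by linarith
  have hq : 1 < p / (p - 1) := by rw [lt_div_iff₀ hp1]; linarith
  have key : ∀ a b s : ℝ, 0 < a → 0 < b → 0 ≤ s →
      asymFlux (p / (p - 1)) a⁻¹ b⁻¹ (asymFlux p a b s) = s := by
    intro a b s ha hb hs
    rw [aux_asymFlux_nonneg p a b s hp hs, aux_asymFlux_nonneg _ _ _ _ hq (by positivity),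
      Real.mul_rpow (by positivity) (by positivity), ← Real.rpow_mul ha.le, ← Real.rpow_mul hs,
      Real.inv_rpow ha.le]
    have e1 : (p - 1) * (p / (p - 1) - 1) = 1 := by field_simp; ring
    have e2 : p * (p / (p - 1) - 1) = p / (p - 1) := by field_simp; ring
    rw [e1, e2, Real.rpow_one, inv_mul_cancel_left₀]
    positivity
  rcases le_total 0 s with h | h
  · exact key a b s ha hb h
  · have := key b a (-s) hb ha (by linarith)
    rw [aux_asymFlux_neg, aux_asymFlux_neg] at this
    linarith

lemma aux_E_flux (p a b s : ℝ) (hp : 1 < p) (ha : 0 < a) (hb : 0 < b) :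
    asymE (p / (p - 1)) a⁻¹ b⁻¹ (asymFlux p a b s) = asymE p a b s := by
  have hp1 : 0 < p - 1 := by linarith
  have hq : 1 < p / (p - 1) := by rw [lt_div_iff₀ hp1]; linarith
  rw [← aux_flux_mul_self _ _ _ _ hq, aux_flux_inv p a b s hp ha hb, mul_comm,
    aux_flux_mul_self _ _ _ _ hp]

lemma aux_E_eq_zero (p a b s : ℝ) (hp : 1 < p) (ha : 0 < a) (hb : 0 < b)
    (h : asymE p a b s = 0) : s = 0 := by
  have key : ∀ a b s : ℝ, 0 < a → 0 ≤ s → asymE p a b s = 0 → s = 0 := by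
    intro a b s ha hs h
    rw [aux_asymE_nonneg p a b s hp hs] at h
    rcases hs.eq_or_lt with h' | h'
    · exact h'.symm
    · have : 0 < a ^ p * s ^ p := by positivity
      linarith
  rcases le_total 0 s with h' | h'
  · exact key a b s ha h' h
  · have := key b a (-s) hb (by linarith) (by rw [aux_asymE_neg]; exact h)
    linarith

/-- Strong form of the equation. -/
def StrongSol (p a b μ α γ : ℝ) (u u' : ℝ → ℝ) : Prop :=
  C1On α γ u u' ∧ ∀ t ∈ Set.Icc α γ,
    HasDerivWithinAt (fun t => asymFlux p a b (u' t)) (-(μ * asymFlux p 1 1 (u t))) (Set.Icc α γ) t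

lemma aux_C1On_cont {α γ : ℝ} {u u' : ℝ → ℝ} (h : C1On α γ u u') : ContinuousOn u (Icc α γ) :=
  fun t ht => (h.1 t ht).continuousWithinAt

lemma aux_const {α γ : ℝ} {f : ℝ → ℝ}
    (h : ∀ t ∈ Icc α γ, HasDerivWithinAt f 0 (Icc α γ) t) {x y : ℝ} (hx : x ∈ Icc α γ)
    (hy : y ∈ Icc α γ) : f x = f y := by
  have := (convex_Icc α γ).norm_image_sub_le_of_norm_hasDerivWithin_le (f := f) (f' := fun _ => 0)
    (C := 0) h (by simp) hy hx
  simp at this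
  linarith

/-- Energy conservation. -/
lemma aux_energy {p a b μ α γ : ℝ} (hp : 1 < p) (ha : 0 < a) (hb : 0 < b) {u u' : ℝ → ℝ}
    (h : StrongSol p a b μ α γ u u') {x y : ℝ} (hx : x ∈ Icc α γ) (hy : y ∈ Icc α γ) :
    (p - 1) * asymE p a b (u' x) + μ * asymE p 1 1 (u x) =
    (p - 1) * asymE p a b (u' y) + μ * asymE p 1 1 (u y) := by
  have hp1 : 0 < p - 1 := by linarith
  have hq : 1 < p / (p - 1) := by rw [lt_div_iff₀ hp1]; linarith
  refine aux_const (f := fun t => (p - 1) * asymE p a b (u' t) + μ * asymE p 1 1 (u t)) ?_ hx hy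
  intro t ht
  have h1 := ((aux_asymE_deriv (p / (p - 1)) a⁻¹ b⁻¹ hq (asymFlux p a b (u' t))).comp_hasDerivWithinAt t
    (h.2 t ht)).const_mul (p - 1)
  have h2 := ((aux_asymE_deriv p 1 1 hp (u t)).comp_hasDerivWithinAt t (h.1.1 t ht)).const_mul μ
  have h3 := h1.add h2
  rw [aux_flux_inv p a b _ hp ha hb] at h3
  refine (h3.congr_deriv ?_).congr ?_ ?_
  · field_simp; ring
  · intro y _; simp [aux_E_flux p a b _ hp ha hb]
  · simp [aux_E_flux p a b _ hp ha hb]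

lemma aux_intble {L : ℝ} (hL : 0 < L) {f : ℝ → ℝ} (h : ContinuousOn f (Icc 0 L)) :
    IntervalIntegrable f MeasureTheory.volume 0 L := by
  apply ContinuousOn.intervalIntegrable
  rwa [uIcc_of_le hL.le]

lemma aux_int_congr {L : ℝ} (hL : 0 < L) {f g : ℝ → ℝ} (h : ∀ t ∈ Icc 0 L, f t = g t) :
    ∫ t in (0:ℝ)..L, f t = ∫ t in (0:ℝ)..L, g t := by
  apply intervalIntegral.integral_congr
  rw [uIcc_of_le hL.le]
  exact h

lemma aux_ftc {L : ℝ} (hL : 0 < L) {f f' : ℝ → ℝ}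
    (h : ∀ t ∈ Icc 0 L, HasDerivWithinAt f (f' t) (Icc 0 L) t) (hc : ContinuousOn f' (Icc 0 L)) :
    ∫ t in (0:ℝ)..L, f' t = f L - f 0 :=
  intervalIntegral.integral_eq_sub_of_hasDerivAt_of_le hL.le
    (fun t ht => (h t ht).continuousWithinAt)
    (fun t ht => (h t (Ioo_subset_Icc_self ht)).hasDerivAt (Icc_mem_nhds ht.1 ht.2))
    (aux_intble hL hc)

/-- Primitive of a continuous function on `[0,L]`. -/
lemma aux_prim {L : ℝ} (hL : 0 < L) {f : ℝ → ℝ} (hc : ContinuousOn f (Icc 0 L)) :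
    ∃ F : ℝ → ℝ, F 0 = 0 ∧ ∀ t ∈ Icc 0 L, HasDerivWithinAt F (f t) (Icc 0 L) t := by
  set g : ℝ → ℝ := IccExtend hL.le ((Icc 0 L).domRestrict f) with hg
  have hgc : Continuous g := (continuousOn_iff_continuous_domRestrict.1 hc).Icc_extend'
  have hgf : ∀ t ∈ Icc 0 L, g t = f t := by
    intro t ht; rw [hg, IccExtend_of_mem _ _ ht]; rfl
  refine ⟨fun t => ∫ s in (0:ℝ)..t, g s, by simp, fun t ht => ?_⟩
  rw [← hgf t ht]
  exact (hgc.integral_hasStrictDerivAt 0 t).hasDerivAt.hasDerivWithinAt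

/-- du Bois-Reymond: from weak to strong. -/
lemma aux_weak_strong {L : ℝ} (hL : 0 < L) {F g : ℝ → ℝ} (hF : ContinuousOn F (Icc 0 L))
    (hg : ContinuousOn g (Icc 0 L))
    (h : ∀ φ φ' : ℝ → ℝ, Adm L φ φ' →
      (∫ t in (0:ℝ)..L, F t * φ' t) = ∫ t in (0:ℝ)..L, g t * φ t) :
    ∀ t ∈ Icc 0 L, HasDerivWithinAt F (-(g t)) (Icc 0 L) t := by
  obtain ⟨G, hG0, hG⟩ := aux_prim hL hg
  have hGc : ContinuousOn G (Icc 0 L) := fun t ht => (hG t ht).continuousWithinAt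
  have hh : ContinuousOn (fun t => F t + G t) (Icc 0 L) := hF.add hGc
  set c : ℝ := (∫ t in (0:ℝ)..L, (F t + G t)) / L with hcdef
  have hhc : ContinuousOn (fun t => F t + G t - c) (Icc 0 L) := hh.sub continuousOn_const
  obtain ⟨φ, hφ0, hφ⟩ := aux_prim hL hhc
  have hφc : ContinuousOn φ (Icc 0 L) := fun t ht => (hφ t ht).continuousWithinAt
  have hint : ∫ t in (0:ℝ)..L, (F t + G t - c) = 0 := by
    rw [intervalIntegral.integral_sub (aux_intble hL hh) (by simp)]
    simp [hcdef]; field_simp; simp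
  have hφL : φ L = 0 := by
    have := aux_ftc hL hφ hhc
    rw [hint, hφ0] at this; linarith
  have k1 : ContinuousOn (fun t => g t * φ t) (Icc 0 L) := hg.mul hφc
  have k2 : ContinuousOn (fun t => G t * (F t + G t - c)) (Icc 0 L) := hGc.mul hhc
  have k3 : ContinuousOn (fun t => F t * (F t + G t - c)) (Icc 0 L) := hF.mul hhc
  have k4 : ContinuousOn (fun t => c * (F t + G t - c)) (Icc 0 L) := continuousOn_const.mul hhc
  have hw := h φ _ ⟨⟨hφ, hhc⟩, hφ0, hφL⟩
  have hprod := aux_ftc hL (f := fun t => G t * φ t) (fun t ht => (hG t ht).mul (hφ t ht))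
    (k1.add k2)
  simp only [hG0, hφ0, hφL, mul_zero, sub_zero] at hprod
  rw [intervalIntegral.integral_add (aux_intble hL k1) (aux_intble hL k2)] at hprod
  have hsq : ∫ t in (0:ℝ)..L, (F t + G t - c) ^ 2 = 0 := by
    have e : ∀ t ∈ Icc 0 L, (F t + G t - c) ^ 2 =
      (F t * (F t + G t - c) + G t * (F t + G t - c)) - c * (F t + G t - c) := by
      intro t _; ring
    rw [aux_int_congr hL e, intervalIntegral.integral_sub
      ((aux_intble hL k3).add (aux_intble hL k2)) (aux_intble hL k4),
      intervalIntegral.integral_add (aux_intble hL k3) (aux_intble hL k2),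
      intervalIntegral.integral_const_mul, hint]
    linarith
  have hz : ∀ t ∈ Icc 0 L, F t + G t - c = 0 := by
    by_contra hcon
    push Not at hcon
    obtain ⟨t, ht, hne⟩ := hcon
    have := intervalIntegral.integral_pos hL (f := fun t => (F t + G t - c) ^ 2) (hhc.pow 2)
      (fun x _ => by positivity) ⟨t, ht, by positivity⟩
    linarith
  intro t ht
  have h1 := ((hasDerivWithinAt_const t (Icc 0 L) c).sub (hG t ht))
  refine (h1.congr_deriv (by simp)).congr (fun y hy => ?_) ?_
  · have := hz y hy; simp; linarith
  · have := hz t ht; simp; linarith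

lemma aux_quot_tendsto {s : Set ℝ} {e : ℝ} {v w : ℝ → ℝ} {dv dw : ℝ}
    (hv : HasDerivWithinAt v dv s e) (hw : HasDerivWithinAt w dw s e) (hv0 : v e = 0)
    (hw0 : w e = 0) (hne : dv ≠ 0) :
    Filter.Tendsto (fun t => w t / v t) (nhdsWithin e (s \ {e})) (nhds (dw / dv)) := by
  rw [hasDerivWithinAt_iff_tendsto_slope] at hv hw
  refine (hw.div hv hne).congr' ?_
  filter_upwards [self_mem_nhdsWithin] with t ht
  have : t - e ≠ 0 := sub_ne_zero.2 ht.2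
  simp only [Pi.div_apply, slope_def_field, hv0, hw0, sub_zero]
  field_simp

/-- Continuity of the Picone test function at a zero. -/
lemma aux_psi_cont {s : Set ℝ} {e p : ℝ} (hp : 1 < p) {v w : ℝ → ℝ} {dv dw : ℝ}
    (hv : HasDerivWithinAt v dv s e) (hw : HasDerivWithinAt w dw s e) (hv0 : v e = 0)
    (hw0 : w e = 0) (hne : dv ≠ 0) :
    ContinuousWithinAt (fun t => v t * (max (w t / v t) 0) ^ p) s e := by
  rw [← continuousWithinAt_sdiff_self]
  have h1 := aux_quot_tendsto hv hw hv0 hw0 hne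
  have h2 : Filter.Tendsto (fun t => (max (w t / v t) 0) ^ p) (nhdsWithin e (s \ {e}))
      (nhds ((max (dw / dv) 0) ^ p)) :=
    (h1.max tendsto_const_nhds).rpow_const (Or.inr (by linarith))
  have h3 : Filter.Tendsto v (nhdsWithin e (s \ {e})) (nhds (v e)) :=
    hv.continuousWithinAt.mono sdiff_subset
  have h4 := h3.mul h2
  rw [hv0, zero_mul] at h4
  unfold ContinuousWithinAt
  simpa [hv0] using h4

/-- Picone inequality in differential form. -/
lemma aux_picone {p a b ν L : ℝ} (hp : 1 < p) (ha : 0 < a) (hb : 0 < b) (hL : 0 < L)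
    {v v' w w' : ℝ → ℝ} (hv : StrongSol p a b ν 0 L v v') (hv0 : v 0 = 0) (hvL : v L = 0)
    (hpos : ∀ t ∈ Ioo 0 L, 0 < v t) (hd0 : v' 0 ≠ 0) (hdL : v' L ≠ 0) (hw : Adm L w w') :
    ∃ Ψ D : ℝ → ℝ, ContinuousOn Ψ (Icc 0 L) ∧ Ψ 0 = 0 ∧ Ψ L = 0 ∧
      ∀ t ∈ Ioo 0 L, HasDerivAt Ψ (D t) t ∧
        D t ≤ (if 0 < w t then asymE p a b (w' t) else 0) - ν * (max (w t) 0) ^ p := by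
  have h0 : (0:ℝ) ∈ Icc 0 L := ⟨le_rfl, hL.le⟩
  have hLm : L ∈ Icc 0 L := ⟨hL.le, le_rfl⟩
  obtain ⟨⟨hw1, hw2⟩, hw0, hwL⟩ := hw
  have hFc : ContinuousOn (fun t => asymFlux p a b (v' t)) (Icc 0 L) :=
    fun t ht => (hv.2 t ht).continuousWithinAt
  refine ⟨fun t => asymFlux p a b (v' t) * (v t * (max (w t / v t) 0) ^ p),
    fun t => -(ν * asymFlux p 1 1 (v t)) * (v t * (max (w t / v t) 0) ^ p) +
      asymFlux p a b (v' t) * (v' t * (max (w t / v t) 0) ^ p + v t *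
        (p * (max (w t / v t) 0) ^ (p - 1) * ((w' t * v t - w t * v' t) / v t ^ 2))),
    ?_, by simp [hv0], by simp [hvL], ?_⟩
  · refine hFc.mul fun t ht => ?_
    by_cases ht0 : t = 0
    · subst ht0; exact aux_psi_cont hp (hv.1.1 _ ht) (hw1 _ ht) hv0 hw0 hd0
    by_cases htL : t = L
    · subst htL; exact aux_psi_cont hp (hv.1.1 _ ht) (hw1 _ ht) hvL hwL hdL
    have hvt : 0 < v t := hpos t ⟨lt_of_le_of_ne ht.1 (Ne.symm ht0), lt_of_le_of_ne ht.2 htL⟩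
    have hvc := (hv.1.1 t ht).continuousWithinAt
    have hwc := (hw1 t ht).continuousWithinAt
    exact hvc.mul (((hwc.div hvc hvt.ne').max continuousWithinAt_const).rpow_const
      (Or.inr (by linarith)))
  · intro t ht
    have htc := Ioo_subset_Icc_self ht
    have hn := Icc_mem_nhds ht.1 ht.2
    have hvt := hpos t ht
    have dv := (hv.1.1 t htc).hasDerivAt hn
    have dw := (hw1 t htc).hasDerivAt hn
    have dF := (hv.2 t htc).hasDerivAt hn
    have dq := dw.div dv hvt.ne'
    have dm := (aux_hasDerivAt_pos p hp (w t / v t)).comp t dq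
    refine ⟨dF.mul (dv.mul dm), ?_⟩
    dsimp only
    by_cases hwt : 0 < w t
    · rw [if_pos hwt, max_eq_left hwt.le]
      have hc : 0 < w t / v t := by positivity
      rw [max_eq_left hc.le, aux_asymFlux_nonneg p 1 1 _ hp hvt.le, Real.one_rpow, one_mul]
      set c := w t / v t with hcdef
      have hwc : w t = c * v t := by rw [hcdef]; field_simp
      have e1 : (w' t * v t - w t * v' t) / v t ^ 2 = (w' t - c * v' t) / v t := by
        rw [hwc]; field_simp
      have e2 : v t ^ (p - 1) * (v t * c ^ p) = w t ^ p := by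
        rw [hwc, Real.mul_rpow hc.le hvt.le, ← aux_rpow_mul_self p (v t) hp hvt.le]; ring
      have e3 := aux_tangent p a b (c * v' t) (w' t) hp ha.le hb.le
      rw [aux_flux_smul p a b c _ hc.le, aux_E_smul p a b c _ hc.le,
        ← aux_flux_mul_self p a b (v' t) hp] at e3
      have e4 : -(ν * v t ^ (p - 1)) * (v t * c ^ p) +
          asymFlux p a b (v' t) * (v' t * c ^ p + v t *
          (p * c ^ (p - 1) * ((w' t * v t - w t * v' t) / v t ^ 2))) =
          - ν * (v t ^ (p - 1) * (v t * c ^ p)) +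
          (c ^ p * (asymFlux p a b (v' t) * v' t) +
          p * (c ^ (p - 1) * asymFlux p a b (v' t)) * (w' t - c * v' t)) := by
        rw [e1]; field_simp
      rw [e4, e2]
      linarith
    · push Not at hwt
      rw [if_neg (not_lt.2 hwt), max_eq_right hwt,
        max_eq_right (div_nonpos_of_nonpos_of_nonneg hwt hvt.le),
        Real.zero_rpow (by linarith : p ≠ 0), Real.zero_rpow (by linarith : p - 1 ≠ 0)]
      simp

lemma aux_reflect {L : ℝ} {w w' : ℝ → ℝ} (hw : Adm L w w') :
    Adm L (fun t => - w (L - t)) (fun t => w' (L - t)) := by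
  obtain ⟨⟨h1, h2⟩, h3, h4⟩ := hw
  have hm : MapsTo (fun t : ℝ => L - t) (Icc 0 L) (Icc 0 L) := by
    intro t ht; exact ⟨by linarith [ht.2], by linarith [ht.1]⟩
  refine ⟨⟨fun t ht => ?_, ?_⟩, by simp [h4], by simp [h3]⟩
  · have hd : HasDerivWithinAt (fun t : ℝ => L - t) (-1) (Icc 0 L) t := by
      simpa using (hasDerivWithinAt_id t (Icc 0 L)).const_sub L
    have := ((h1 (L - t) (hm ht)).comp t hd hm).neg
    refine this.congr_deriv (by simp)
  · exact h2.comp (by fun_prop) hm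

lemma aux_lower {p a b ν L : ℝ} (hp : 1 < p) (ha : 0 < a) (hb : 0 < b) (hL : 0 < L)
    {v v' w w' : ℝ → ℝ} (hv : StrongSol p a b ν 0 L v v') (hv0 : v 0 = 0) (hvL : v L = 0)
    (hpos : ∀ t ∈ Ioo 0 L, 0 < v t) (hd0 : v' 0 ≠ 0) (hdL : v' L ≠ 0) (hw : Adm L w w') :
    ν * (∫ t in (0:ℝ)..L, |w t| ^ p) ≤ ∫ t in (0:ℝ)..L, asymE p a b (w' t) := by
  obtain ⟨Ψ, D, hΨ, hΨ0, hΨL, hD⟩ := aux_picone hp ha hb hL hv hv0 hvL hpos hd0 hdL hw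
  obtain ⟨Ω, B, hΩ, hΩ0, hΩL, hB⟩ :=
    aux_picone hp ha hb hL hv hv0 hvL hpos hd0 hdL (aux_reflect hw)
  have hwc := aux_C1On_cont hw.1
  have c1 : ContinuousOn (fun t => |w t| ^ p) (Icc 0 L) :=
    hwc.abs.rpow_const (fun _ _ => Or.inr (by linarith))
  have c1' : ContinuousOn (fun t => ν * |w t| ^ p) (Icc 0 L) := continuousOn_const.mul c1
  have c2 : ContinuousOn (fun t => asymE p a b (w' t)) (Icc 0 L) :=
    (aux_asymE_cont p a b hp).comp_continuousOn hw.1.2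
  have c3 : ContinuousOn (fun t => asymE p a b (w' t) - ν * |w t| ^ p) (Icc 0 L) := c2.sub c1'
  obtain ⟨I, hI0, hI⟩ := aux_prim hL c3
  have hm : MapsTo (fun t : ℝ => L - t) (Icc 0 L) (Icc 0 L) := by
    intro t ht; exact ⟨by linarith [ht.2], by linarith [ht.1]⟩
  have hmono : MonotoneOn (fun t => I t - (Ψ t - Ω (L - t))) (Icc 0 L) := by
    have hder : ∀ t ∈ Ioo 0 L, HasDerivAt (fun t => I t - (Ψ t - Ω (L - t)))
        ((asymE p a b (w' t) - ν * |w t| ^ p) - (D t + B (L - t))) t := by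
      intro t ht
      have ht' : L - t ∈ Ioo 0 L := ⟨by linarith [ht.2], by linarith [ht.1]⟩
      have d1 := (hI t (Ioo_subset_Icc_self ht)).hasDerivAt (Icc_mem_nhds ht.1 ht.2)
      have d2 := (hD t ht).1
      have hd : HasDerivAt (fun t : ℝ => L - t) (-1) t := by
        simpa using (hasDerivAt_id t).const_sub L
      have d3 := (hB (L - t) ht').1.comp t hd
      exact (d1.sub (d2.sub d3)).congr_deriv (by simp)
    refine monotoneOn_of_deriv_nonneg (convex_Icc 0 L) ?_ ?_ ?_
    · exact ContinuousOn.sub (fun t ht => (hI t ht).continuousWithinAt)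
        (hΨ.sub (hΩ.comp (by fun_prop) hm))
    · rw [interior_Icc]
      exact fun t ht => (hder t ht).differentiableAt.differentiableWithinAt
    · rw [interior_Icc]
      intro t ht
      rw [(hder t ht).deriv]
      have ht' : L - t ∈ Ioo 0 L := ⟨by linarith [ht.2], by linarith [ht.1]⟩
      have i1 := (hD t ht).2
      have i2 := (hB (L - t) ht').2
      simp only [sub_sub_cancel] at i2
      have hp0 : p ≠ 0 := by linarith
      rcases lt_trichotomy (w t) 0 with h | h | h
      · rw [if_neg (by linarith), max_eq_right h.le, Real.zero_rpow hp0] at i1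
        rw [if_pos (by linarith), max_eq_left (by linarith)] at i2
        rw [abs_of_neg h]
        linarith
      · rw [h] at i1 i2 ⊢
        simp [Real.zero_rpow hp0] at i1 i2 ⊢
        have := aux_asymE_ge p a b (w' t) ha.le hb.le
        linarith
      · rw [if_pos h, max_eq_left h.le] at i1
        rw [if_neg (by linarith), max_eq_right (by linarith), Real.zero_rpow hp0] at i2
        rw [abs_of_pos h]
        linarith
  have hend := hmono (a := 0) (b := L) ⟨le_rfl, hL.le⟩ ⟨hL.le, le_rfl⟩ hL.le
  simp [hI0, hΨ0, hΨL, hΩ0, hΩL] at hend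
  have hf := aux_ftc hL hI c3
  rw [hI0] at hf
  rw [intervalIntegral.integral_sub (aux_intble hL c2)
    (aux_intble hL c1'), intervalIntegral.integral_const_mul] at hf
  linarith

/-- A positive solution on `[0,L]` has eigenvalue `lam1`. -/
lemma aux_key {p a b ν L : ℝ} (hp : 1 < p) (ha : 0 < a) (hb : 0 < b) (hL : 0 < L)
    {v v' : ℝ → ℝ} (hv : StrongSol p a b ν 0 L v v') (hv0 : v 0 = 0) (hvL : v L = 0)
    (hpos : ∀ t ∈ Ioo 0 L, 0 < v t) (hd0 : v' 0 ≠ 0) (hdL : v' L ≠ 0) :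
    lam1 p a b L = ν := by
  have hp0 : p ≠ 0 := by linarith
  have hvc := aux_C1On_cont hv.1
  have c1 : ContinuousOn (fun t => |v t| ^ p) (Icc 0 L) :=
    hvc.abs.rpow_const (fun _ _ => Or.inr (by linarith))
  have c1' : ContinuousOn (fun t => ν * |v t| ^ p) (Icc 0 L) := continuousOn_const.mul c1
  have c2 : ContinuousOn (fun t => asymE p a b (v' t)) (Icc 0 L) :=
    (aux_asymE_cont p a b hp).comp_continuousOn hv.1.2
  set N := ∫ t in (0:ℝ)..L, |v t| ^ p with hN
  have hNpos : 0 < N := by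
    refine intervalIntegral.integral_pos hL c1 (fun x _ => by positivity)
      ⟨L / 2, ⟨by linarith, by linarith⟩, ?_⟩
    have := hpos (L / 2) ⟨by linarith, by linarith⟩
    positivity
  have hE : ∫ t in (0:ℝ)..L, asymE p a b (v' t) = ν * N := by
    have hd : ∀ t ∈ Icc 0 L, HasDerivWithinAt (fun t => asymFlux p a b (v' t) * v t)
        (asymE p a b (v' t) - ν * |v t| ^ p) (Icc 0 L) t := by
      intro t ht
      refine ((hv.2 t ht).mul (hv.1.1 t ht)).congr_deriv ?_
      rw [aux_abs_rpow p _ hp, ← aux_flux_mul_self p a b _ hp, ← aux_flux_mul_self p 1 1 _ hp]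
      ring
    have := aux_ftc hL hd (c2.sub c1')
    rw [intervalIntegral.integral_sub (aux_intble hL c2)
      (aux_intble hL c1'), intervalIntegral.integral_const_mul,
      hv0, hvL] at this
    linarith
  have hmem : ν ∈ { E : ℝ | ∃ u u' : ℝ → ℝ, Adm L u u' ∧
      (∫ t in (0:ℝ)..L, |u t| ^ p) = 1 ∧
      E = ∫ t in (0:ℝ)..L, asymE p a b (u' t) } := by
    set c := (N⁻¹) ^ (p⁻¹) with hc
    have hc0 : 0 ≤ c := by positivity
    have hcp : c ^ p = N⁻¹ := Real.rpow_inv_rpow (by positivity) hp0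
    refine ⟨fun t => c * v t, fun t => c * v' t, ⟨⟨fun t ht => (hv.1.1 t ht).const_mul c,
      continuousOn_const.mul hv.1.2⟩, by simp [hv0], by simp [hvL]⟩, ?_, ?_⟩
    · rw [aux_int_congr hL (g := fun t => c ^ p * |v t| ^ p),
        intervalIntegral.integral_const_mul, hcp, ← hN]
      · field_simp
      · intro t _
        rw [abs_mul, abs_of_nonneg hc0, Real.mul_rpow hc0 (abs_nonneg _)]
    · rw [aux_int_congr hL (g := fun t => c ^ p * asymE p a b (v' t)),
        intervalIntegral.integral_const_mul, hcp, hE]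
      · field_simp
      · intro t _
        exact aux_E_smul p a b c _ hc0
  apply le_antisymm
  · refine csInf_le ⟨0, ?_⟩ hmem
    rintro E ⟨w, w', _, _, rfl⟩
    exact intervalIntegral.integral_nonneg hL.le fun t _ => aux_asymE_ge p a b _ ha.le hb.le
  · refine le_csInf ⟨ν, hmem⟩ ?_
    rintro E ⟨w, w', hw, hw1, rfl⟩
    have := aux_lower hp ha hb hL hv hv0 hvL hpos hd0 hdL hw
    rwa [hw1, mul_one] at this

lemma aux_rescale {p a b μ L c β σ : ℝ} {u u' : ℝ → ℝ} (hp : 1 < p)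
    (h : StrongSol p a b μ 0 L u u') (hσ : σ = 1 ∨ σ = -1) (hc : 0 < c)
    (hm : MapsTo (fun t => β + σ * c * t) (Icc 0 L) (Icc 0 L)) :
    StrongSol p a b (c ^ p * μ) 0 L (fun t => σ * u (β + σ * c * t))
      (fun t => c * u' (β + σ * c * t)) := by
  have hσ2 : σ * σ = 1 := by rcases hσ with rfl | rfl <;> norm_num
  have hd : ∀ t, HasDerivWithinAt (fun t : ℝ => β + σ * c * t) (σ * c) (Icc 0 L) t := by
    intro t
    simpa using ((hasDerivWithinAt_id t (Icc 0 L)).const_mul (σ * c)).const_add β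
  refine ⟨⟨fun t ht => ?_, ?_⟩, fun t ht => ?_⟩
  · have := ((h.1.1 _ (hm ht)).comp t (hd t) hm).const_mul σ
    refine this.congr_deriv ?_
    linear_combination (c * u' (β + σ * c * t)) * hσ2
  · exact continuousOn_const.mul (h.1.2.comp (fun t _ => (hd t).continuousWithinAt) hm)
  · have := ((h.2 _ (hm ht)).comp t (hd t) hm).const_mul (c ^ (p - 1))
    refine (this.congr_deriv ?_).congr (fun y _ => ?_) ?_
    · have e : asymFlux p 1 1 (σ * u (β + σ * c * t)) = σ * asymFlux p 1 1 (u (β + σ * c * t)) := by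
        rcases hσ with rfl | rfl
        · simp
        · simp [aux_asymFlux_neg]
      rw [e, ← aux_rpow_mul_self p c hp hc.le]
      ring
    · simp [aux_flux_smul p a b c _ hc.le]
    · simp [aux_flux_smul p a b c _ hc.le]

lemma aux_arc {p a b L α γ σ : ℝ} {k : ℕ} {u u' : ℝ → ℝ} (hp : 1 < p) (ha : 0 < a) (hb : 0 < b)
    (hL : 0 < L) (hk : 0 < k) (hlam : 0 < lam1 p a b L)
    (h : StrongSol p a b ((k:ℝ) ^ p * lam1 p a b L) 0 L u u') (hσ : σ = 1 ∨ σ = -1)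
    (hα : 0 ≤ α) (hαγ : α < γ) (hγ : γ ≤ L) (huα : u α = 0) (huγ : u γ = 0)
    (hdα : u' α ≠ 0) (hdγ : u' γ ≠ 0) (hpos : ∀ t ∈ Ioo α γ, 0 < σ * u t) :
    γ = α + L / k := by
  have hkr : (0:ℝ) < k := by exact_mod_cast hk
  set c := (γ - α) / L with hcdef
  have hc : 0 < c := div_pos (by linarith) hL
  have hcL : c * L = γ - α := by rw [hcdef]; field_simp
  have key : lam1 p a b L = c ^ p * ((k:ℝ) ^ p * lam1 p a b L) := by
    rcases hσ with rfl | rfl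
    · have hm : MapsTo (fun t => α + 1 * c * t) (Icc 0 L) (Icc 0 L) := by
        intro t ht
        have h1 := mul_le_mul_of_nonneg_left ht.2 hc.le
        have h2 := mul_nonneg hc.le ht.1
        exact ⟨by simp only; linarith, by simp only; linarith⟩
      have eL : α + 1 * c * L = γ := by linarith
      refine aux_key hp ha hb hL (aux_rescale hp h (Or.inl rfl) hc hm) (by simp [huα])
        (by rw [eL, huγ, mul_zero]) ?_ ?_ ?_
      · intro t ht
        have h1 := mul_lt_mul_of_pos_left ht.2 hc
        have h2 := mul_pos hc ht.1
        exact hpos _ ⟨by linarith, by linarith⟩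
      · simpa using ⟨hc.ne', hdα⟩
      · rw [eL]; exact mul_ne_zero hc.ne' hdγ
    · have hm : MapsTo (fun t => γ + (-1) * c * t) (Icc 0 L) (Icc 0 L) := by
        intro t ht
        have h1 := mul_le_mul_of_nonneg_left ht.2 hc.le
        have h2 := mul_nonneg hc.le ht.1
        exact ⟨by simp only; linarith, by simp only; linarith⟩
      have eL : γ + (-1) * c * L = α := by linarith
      refine aux_key hp ha hb hL (aux_rescale hp h (Or.inr rfl) hc hm) (by simp [huγ])
        (by rw [eL, huα, mul_zero]) ?_ ?_ ?_
      · intro t ht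
        have h1 := mul_lt_mul_of_pos_left ht.2 hc
        have h2 := mul_pos hc ht.1
        exact hpos _ ⟨by linarith, by linarith⟩
      · simpa using ⟨hc.ne', hdγ⟩
      · rw [eL]; exact mul_ne_zero hc.ne' hdα
  have h1 : (c * k) ^ p = 1 := by
    rw [Real.mul_rpow hc.le hkr.le]
    have : (c ^ p * (k:ℝ) ^ p) * lam1 p a b L = 1 * lam1 p a b L := by linarith
    exact mul_right_cancel₀ hlam.ne' this
  have h2 : c * k = 1 := (Real.rpow_left_inj (by positivity) zero_le_one (by linarith : p ≠ 0)).1 (by rw [h1, Real.one_rpow])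
  have h3 : (γ - α) * k = L := by rw [← hcL]; linear_combination L * h2
  have : γ - α = L / k := by rw [eq_div_iff hkr.ne']; exact h3
  linarith

lemma aux_sign {x y t₀ : ℝ} {v : ℝ → ℝ} (hc : ContinuousOn v (Ioo x y))
    (hne : ∀ t ∈ Ioo x y, v t ≠ 0) (ht : t₀ ∈ Ioo x y) (hpos : 0 < v t₀) :
    ∀ t ∈ Ioo x y, 0 < v t := by
  intro t hts
  by_contra hcon
  obtain ⟨s, hs, he⟩ := isPreconnected_Ioo.intermediate_value hts ht hc ⟨not_lt.1 hcon, hpos.le⟩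
  exact hne s hs he

lemma aux_step {p a b L z σ : ℝ} {k : ℕ} {u u' : ℝ → ℝ} (hp : 1 < p) (ha : 0 < a) (hb : 0 < b)
    (hL : 0 < L) (hk : 0 < k) (hlam : 0 < lam1 p a b L)
    (h : StrongSol p a b ((k:ℝ) ^ p * lam1 p a b L) 0 L u u') (hσ : σ = 1 ∨ σ = -1)
    (huL : u L = 0) (hsimple : ∀ z ∈ Icc 0 L, u z = 0 → u' z ≠ 0)
    (hz0 : 0 ≤ z) (hzL : z < L) (huz : u z = 0) (hd : 0 < σ * u' z) :
    u (z + L / k) = 0 ∧ σ * u' (z + L / k) < 0 ∧ ∀ t ∈ Ioo z (z + L / k), 0 < σ * u t := by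
  have hσ0 : σ ≠ 0 := by rcases hσ with rfl | rfl <;> norm_num
  have hz : z ∈ Icc 0 L := ⟨hz0, hzL.le⟩
  have hv : ∀ t ∈ Icc 0 L, HasDerivWithinAt (fun t => σ * u t) (σ * u' t) (Icc 0 L) t :=
    fun t ht => (h.1.1 t ht).const_mul σ
  have hvc : ContinuousOn (fun t => σ * u t) (Icc 0 L) := fun t ht => (hv t ht).continuousWithinAt
  have hev : ∀ᶠ t in nhdsWithin z (Ioi z), 0 < σ * u t := by
    have h1 := hasDerivWithinAt_iff_tendsto_slope.1 (hv z hz)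
    have h2 : nhdsWithin z (Ioi z) ≤ nhdsWithin z (Icc 0 L \ {z}) := by
      have : Icc 0 L \ {z} ∈ nhdsWithin z (Ioi z) := by
        filter_upwards [Ioc_mem_nhdsGT hzL] with t ht
        exact ⟨⟨by linarith [ht.1], ht.2⟩, ne_of_gt ht.1⟩
      exact nhdsWithin_le_iff.2 this
    filter_upwards [(h1.mono_left h2).eventually (lt_mem_nhds hd), self_mem_nhdsWithin] with t ht htz
    rw [slope_def_field, huz, mul_zero, sub_zero] at ht
    have htz' : 0 < t - z := sub_pos.2 htz
    exact (div_pos_iff_of_pos_right htz').1 ht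
  obtain ⟨d, hzd, hd1⟩ := mem_nhdsGT_iff_exists_Ioo_subset.1 hev
  have hzd' : z < d := hzd
  have hdL : d ≤ L := by
    by_contra hcon
    have : 0 < σ * u L := hd1 ⟨hzL, not_le.1 hcon⟩
    simp [huL] at this
  have hsub : Icc d L ⊆ Icc 0 L := Icc_subset_Icc_left (by linarith)
  have hcomp : IsCompact (Icc d L ∩ u ⁻¹' {0}) := by
    have : IsClosed (Icc d L ∩ u ⁻¹' {0}) :=
      ((aux_C1On_cont h.1).mono hsub).preimage_isClosed_of_isClosed isClosed_Icc isClosed_singleton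
    exact isCompact_Icc.of_isClosed_subset this inter_subset_left
  obtain ⟨γ, ⟨hγm, hγ0⟩, hleast⟩ := hcomp.exists_isLeast ⟨L, ⟨hdL, le_rfl⟩, huL⟩
  have huγ : u γ = 0 := hγ0
  have hzγ : z < γ := lt_of_lt_of_le hzd' hγm.1
  have hγI : γ ∈ Icc 0 L := hsub hγm
  have hsub2 : Ioo z γ ⊆ Icc 0 L := fun t ht => ⟨by linarith [ht.1], by linarith [ht.2, hγm.2]⟩
  have hne : ∀ t ∈ Ioo z γ, σ * u t ≠ 0 := by
    intro t ht h0
    have hut : u t = 0 := by simpa [hσ0] using h0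
    rcases lt_or_ge t d with htd | htd
    · have : 0 < σ * u t := hd1 ⟨ht.1, htd⟩
      linarith
    · have := hleast ⟨⟨htd, (hsub2 ht).2⟩, hut⟩
      linarith [ht.2]
  have hmid : (z + d) / 2 ∈ Ioo z d := ⟨by linarith, by linarith⟩
  have hpos := aux_sign (hvc.mono hsub2) hne (t₀ := (z + d) / 2)
    ⟨hmid.1, by linarith [hmid.2, hγm.1]⟩ (hd1 hmid)
  have hγe : γ = z + L / k := aux_arc hp ha hb hL hk hlam h hσ hz0 hzγ hγm.2 huz huγ
    (hsimple z hz huz) (hsimple γ hγI huγ) hpos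
  rw [← hγe]
  refine ⟨huγ, ?_, hpos⟩
  refine lt_of_le_of_ne ?_ (mul_ne_zero hσ0 (hsimple γ hγI huγ))
  have h1 := hasDerivWithinAt_iff_tendsto_slope.1 (hv γ hγI)
  have hmem : Ioo z γ ∈ nhdsWithin γ (Iio γ) := Ioo_mem_nhdsLT hzγ
  have h2 : nhdsWithin γ (Iio γ) ≤ nhdsWithin γ (Icc 0 L \ {γ}) := by
    refine nhdsWithin_le_iff.2 ?_
    filter_upwards [hmem] with t ht
    exact ⟨hsub2 ht, ne_of_lt ht.2⟩
  refine le_of_tendsto (h1.mono_left h2) ?_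
  filter_upwards [hmem] with t ht
  rw [slope_def_field, huγ, mul_zero, sub_zero]
  exact div_nonpos_of_nonneg_of_nonpos (hpos t ht).le (by linarith [ht.2])

theorem stmt18 (p a b L : ℝ) (hp : 1 < p) (ha : 0 < a) (hb : 0 < b) (hL : 0 < L)
    (k : ℕ) (hk : 0 < k) (u u' : ℝ → ℝ)
    (hsol : IsWeakSol p a b L u u'
      (fun t => (k : ℝ) ^ p * lam1 p a b L * |u t| ^ (p - 2) * u t))
    (hne : ∃ t ∈ Set.Icc (0:ℝ) L, u t ≠ 0) :
    {t ∈ Set.Icc (0:ℝ) L | u t = 0} = {x : ℝ | ∃ j : ℕ, j ≤ k ∧ x = (j : ℝ) * L / k} ∧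
    (∀ z ∈ Set.Icc (0:ℝ) L, u z = 0 → u' z ≠ 0) ∧
    ∃ ε : ℝ, (ε = 1 ∨ ε = -1) ∧
      ∀ j : ℕ, j < k → ∀ t ∈ Set.Ioo ((j : ℝ) * L / k) (((j : ℝ) + 1) * L / k),
        0 < ε * (-1 : ℝ) ^ j * u t := by
  have hkr : (0:ℝ) < k := by exact_mod_cast hk
  obtain ⟨⟨hC, hu0, huL⟩, hweak⟩ := hsol
  set lam := lam1 p a b L with hlamdef
  set μ := (k:ℝ) ^ p * lam with hμ
  have h0 : (0:ℝ) ∈ Icc 0 L := ⟨le_rfl, hL.le⟩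
  have huc := aux_C1On_cont hC
  -- strong form
  have hS : StrongSol p a b μ 0 L u u' := by
    refine ⟨hC, aux_weak_strong hL ((aux_asymFlux_cont p a b hp).comp_continuousOn hC.2)
      (g := fun t => μ * asymFlux p 1 1 (u t))
      (continuousOn_const.mul ((aux_asymFlux_cont p 1 1 hp).comp_continuousOn huc)) ?_⟩
    intro φ φ' hφ
    refine (hweak φ φ' hφ).trans (aux_int_congr hL fun t _ => ?_)
    simp only [← aux_abs_flux p _ hp]
    ring
  -- positivity of the eigenvalue
  have hlam0 : 0 ≤ lam := by
    refine Real.sInf_nonneg ?_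
    rintro E ⟨w, w', _, _, rfl⟩
    exact intervalIntegral.integral_nonneg hL.le fun t _ => aux_asymE_ge p a b _ ha.le hb.le
  have hlam : 0 < lam := by
    refine lt_of_le_of_ne hlam0 fun h => ?_
    have hμ0 : μ = 0 := by rw [hμ, ← h, mul_zero]
    obtain ⟨ξ, hξ, hξ0⟩ := exists_hasDerivAt_eq_zero (f := u) (f' := u') hL huc
      (hu0.trans huL.symm)
      (fun t ht => (hC.1 t (Ioo_subset_Icc_self ht)).hasDerivAt (Icc_mem_nhds ht.1 ht.2))
    have hF : ∀ t ∈ Icc 0 L, u' t = 0 := by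
      intro t ht
      have := aux_const (f := fun t => asymFlux p a b (u' t))
        (fun s hs => (hS.2 s hs).congr_deriv (by simp [hμ0])) ht (Ioo_subset_Icc_self hξ)
      rw [← hξ0, ← aux_flux_inv p a b (u' t) hp ha hb, ← aux_flux_inv p a b (u' ξ) hp ha hb]
      exact congrArg _ this
    obtain ⟨t, ht, hut⟩ := hne
    apply hut
    rw [← hu0]
    exact aux_const (fun s hs => (hC.1 s hs).congr_deriv (hF s hs)) ht h0
  have hμpos : 0 < μ := by rw [hμ]; positivity
  -- zeros are simple
  have hsimple : ∀ z ∈ Set.Icc (0:ℝ) L, u z = 0 → u' z ≠ 0 := by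
    intro z hz huz hdz
    obtain ⟨t, ht, hut⟩ := hne
    apply hut
    have he := aux_energy hp ha hb hS ht hz
    have z1 : asymE p a b 0 = 0 := by simp [asymE, Real.zero_rpow (by linarith : p ≠ 0)]
    have z2 : asymE p 1 1 0 = 0 := by simp [asymE, Real.zero_rpow (by linarith : p ≠ 0)]
    rw [huz, hdz, z1, z2] at he
    have e1 := mul_nonneg (by linarith : 0 ≤ p - 1) (aux_asymE_ge p a b (u' t) ha.le hb.le)
    have e2 := mul_nonneg hμpos.le (aux_asymE_ge p 1 1 (u t) zero_le_one zero_le_one)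
    have e3 : μ * asymE p 1 1 (u t) = 0 := by linarith
    rcases mul_eq_zero.1 e3 with e | e
    · exact absurd e hμpos.ne'
    · exact aux_E_eq_zero p 1 1 _ hp one_pos one_pos e
  -- initial sign
  obtain ⟨ε, hε, hε0⟩ : ∃ ε : ℝ, (ε = 1 ∨ ε = -1) ∧ 0 < ε * u' 0 := by
    rcases lt_or_gt_of_ne (hsimple 0 h0 hu0) with h | h
    · exact ⟨-1, Or.inr rfl, by linarith⟩
    · exact ⟨1, Or.inl rfl, by linarith⟩
  have hsg : ∀ j : ℕ, ε * (-1 : ℝ) ^ j = 1 ∨ ε * (-1 : ℝ) ^ j = -1 := by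
    intro j
    rcases neg_one_pow_eq_or ℝ j with h | h <;> rcases hε with h' | h' <;> simp [h, h']
  have hlt : ∀ j : ℕ, j < k → (j:ℝ) * L / k < L := by
    intro j hj
    rw [div_lt_iff₀ hkr, mul_comm]
    exact mul_lt_mul_of_pos_left (by exact_mod_cast hj) hL
  have hadd : ∀ j : ℕ, (j:ℝ) * L / k + L / k = ((j:ℝ) + 1) * L / k := by intro j; ring
  have hind : ∀ j : ℕ, j ≤ k → u ((j:ℝ) * L / k) = 0 ∧
      0 < ε * (-1 : ℝ) ^ j * u' ((j:ℝ) * L / k) := by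
    intro j
    induction j with
    | zero => intro _; simpa using ⟨hu0, hε0⟩
    | succ j ih =>
      intro hj
      obtain ⟨i1, i2⟩ := ih (by omega)
      obtain ⟨s1, s2, _⟩ := aux_step hp ha hb hL hk hlam hS (hsg j) huL hsimple (by positivity)
        (hlt j (by omega)) i1 i2
      rw [hadd] at s1 s2
      push_cast
      refine ⟨s1, ?_⟩
      rw [pow_succ]
      linarith
  have hsign : ∀ j : ℕ, j < k → ∀ t ∈ Set.Ioo ((j : ℝ) * L / k) (((j : ℝ) + 1) * L / k),
        0 < ε * (-1 : ℝ) ^ j * u t := by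
    intro j hj
    obtain ⟨i1, i2⟩ := hind j hj.le
    obtain ⟨_, _, s3⟩ := aux_step hp ha hb hL hk hlam hS (hsg j) huL hsimple (by positivity)
        (hlt j hj) i1 i2
    rwa [hadd] at s3
  refine ⟨?_, hsimple, ε, hε, hsign⟩
  ext t
  constructor
  · rintro ⟨ht, hut⟩
    set j := ⌊t * k / L⌋₊ with hj
    have hnn : 0 ≤ t * k / L := by have := ht.1; positivity
    have j1 : (j:ℝ) ≤ t * k / L := Nat.floor_le hnn
    have j2 : t * k / L < (j:ℝ) + 1 := Nat.lt_floor_add_one _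
    rw [le_div_iff₀ hL] at j1
    rw [div_lt_iff₀ hL] at j2
    have j1' : (j:ℝ) * L / k ≤ t := by rw [div_le_iff₀ hkr]; exact j1
    have j2' : t < ((j:ℝ) + 1) * L / k := by rw [lt_div_iff₀ hkr]; exact j2
    have hjk : j ≤ k := by
      have : (j:ℝ) * L ≤ k * L := by nlinarith [mul_le_mul_of_nonneg_right ht.2 hkr.le]
      exact_mod_cast le_of_mul_le_mul_right this hL
    refine ⟨j, hjk, ?_⟩
    rcases hjk.lt_or_eq with h | h
    · by_contra hcon
      have := hsign j h t ⟨lt_of_le_of_ne j1' (Ne.symm hcon), j2'⟩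
      rw [hut, mul_zero] at this
      exact lt_irrefl _ this
    · rw [h] at j1' ⊢
      have e : (k:ℝ) * L / k = L := by field_simp
      rw [e] at j1' ⊢
      exact le_antisymm ht.2 j1'
  · rintro ⟨j, hj, rfl⟩
    refine ⟨⟨by positivity, ?_⟩, (hind j hj).1⟩
    rw [div_le_iff₀ hkr, mul_comm]
    exact mul_le_mul_of_nonneg_left (by exact_mod_cast hj) hL.le
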